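/- First Fundamental Theorem for the GFD (Riemann–Liouville case): Let (κ, k) be a pair of Sonine kernels from S_{−1}. Then for every f ∈ C_{−1}(0,∞) and every t > 0, (D_{(k)} I_{(κ)} f)(t) = f(t), i.e. d/dt ∫₀ᵗ k(t−τ) (∫₀^τ κ(τ−s) f(s) ds) dτ = f(t). -/

import Mathlib

open Real MeasureTheory Set Filter Topology

/-- The Laplace convolution `(f * g)(t) = ∫₀ᵗ f(t-τ) g(τ) dτ`. -/
noncomputable def lconv (f g : ℝ → ℝ) : ℝ → ℝ :=
  fun t => ∫ τ in (0:ℝ)..t, f (t - τ) * g τ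

/-- The space `C_{-1}(0,∞)`: functions of the form `t^p f₁(t)` with `p > -1`
and `f₁` continuous on `[0,∞)`. -/
def Cm1 (f : ℝ → ℝ) : Prop :=
  ∃ p : ℝ, -1 < p ∧ ∃ f₁ : ℝ → ℝ, ContinuousOn f₁ (Set.Ici 0) ∧
    ∀ t : ℝ, 0 < t → f t = t ^ p * f₁ t

/-- The subspace `C_{-1,0}(0,∞)`: functions of the form `t^p f₁(t)` with `-1 < p < 0`
and `f₁` continuous on `[0,∞)`. -/
def Cm10 (f : ℝ → ℝ) : Prop :=
  ∃ p : ℝ, -1 < p ∧ p < 0 ∧ ∃ f₁ : ℝ → ℝ, ContinuousOn f₁ (Set.Ici 0) ∧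
    ∀ t : ℝ, 0 < t → f t = t ^ p * f₁ t

/-!
For functions that are integrable near `0` and bounded on compact subsets of `(0, ∞)`, the double
integrals behind iterated Laplace convolutions converge absolutely at every point, so convolution is
associative there. Hence `k * (κ * f) = (κ * k) * f = 1 * f` is the primitive of `f` that
vanishes at `0`.
-/

open ContinuousLinearMap (mul)
open scoped Convolution

section

variable {f g h : ℝ → ℝ} {t x : ℝ}

lemma lconv_comm (f g : ℝ → ℝ) : lconv f g = lconv g f := by
  funext t
  simpa [lconv, mul_comm] using
    (intervalIntegral.integral_comp_sub_left (fun τ => f τ * g (t - τ)) (a := 0) (b := t) t)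

lemma lconv_congr {f' g' : ℝ → ℝ} (ht : 0 ≤ t) (hf : EqOn f f' (Ioo 0 t))
    (hg : EqOn g g' (Ioo 0 t)) : lconv f g t = lconv f' g' t :=
  intervalIntegral.integral_congr_Ioo_of_le ht fun τ hτ => by
    simp only [hf ⟨sub_pos.2 hτ.2, sub_lt_self t hτ.1⟩, hg hτ]

lemma lconv_one_left (f : ℝ → ℝ) (t : ℝ) : lconv (fun _ => 1) f t = ∫ τ in (0 : ℝ)..t, f τ := by
  simp only [lconv, one_mul]

lemma indicator_Ioi_sub_mul_indicator_Ioi (f g : ℝ → ℝ) (x s : ℝ) :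
    indicator (Ioi 0) f (x - s) * indicator (Ioi 0) g s =
      indicator (Ioo 0 x) (fun s => f (x - s) * g s) s := by
  simp only [indicator_apply, mem_Ioi, mem_Ioo, sub_pos]
  split_ifs <;> simp_all

lemma indicator_lconv (f g : ℝ → ℝ) :
    indicator (Ioi 0) (lconv f g) =
      indicator (Ioi 0) f ⋆[mul ℝ ℝ] indicator (Ioi 0) g := by
  rw [lconv_comm, ← posConvolution_eq_convolution_indicator f g (mul ℝ ℝ) volume]
  unfold lconv posConvolution
  simp only [ContinuousLinearMap.mul_apply', mul_comm]

/-- Functions on `(0, ∞)` that are integrable near `0` and bounded on compact subsets of `(0, ∞)`.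
Unlike mere local integrability, this ensures that Laplace convolutions exist at every point, not
only almost everywhere. The values on `(-∞, 0]` are irrelevant. -/
structure LaplaceConvolvable (f : ℝ → ℝ) : Prop where
  integrableOn : ∀ T, IntegrableOn f (Ioc 0 T)
  exists_bound : ∀ ε > 0, ∀ T, ∃ C, ∀ x ∈ Icc ε T, ‖f x‖ ≤ C

namespace LaplaceConvolvable

lemma norm (hf : LaplaceConvolvable f) : LaplaceConvolvable fun x => ‖f x‖ where
  integrableOn T := (hf.integrableOn T).norm
  exists_bound := by simpa only [norm_norm] using hf.exists_bound

lemma intervalIntegrable (hf : LaplaceConvolvable f) (ht : 0 ≤ t) :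
    IntervalIntegrable f volume 0 t :=
  (intervalIntegrable_iff_integrableOn_Ioc_of_le ht).2 (hf.integrableOn t)

lemma aestronglyMeasurable_indicator (hf : LaplaceConvolvable f) :
    AEStronglyMeasurable (indicator (Ioi 0) f) := by
  rw [aestronglyMeasurable_indicator_iff measurableSet_Ioi]
  refine (aecover_Iic tendsto_natCast_atTop_atTop).restrict.aestronglyMeasurable fun n => ?_
  rw [Measure.restrict_restrict measurableSet_Iic, Iic_inter_Ioi]
  exact (hf.integrableOn n).aestronglyMeasurable

lemma intervalIntegrable_comp_sub_left (hf : LaplaceConvolvable f) (hx : 0 ≤ x) :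
    IntervalIntegrable (fun s => f (x - s)) volume 0 x := by
  simpa only [sub_zero, sub_self] using ((hf.intervalIntegrable hx).comp_sub_left x).symm

-- One of `s`, `x - s` is at least `x / 2`, so one of the two factors is bounded.
lemma exists_bound_mul (hf : LaplaceConvolvable f) (hg : LaplaceConvolvable g) {ε : ℝ}
    (hε : 0 < ε) (T : ℝ) :
    ∃ C ≥ 0, ∀ x ∈ Icc ε T, ∀ s ∈ Ioc 0 x, ‖f (x - s) * g s‖ ≤ C * (‖f (x - s)‖ + ‖g s‖) := by
  obtain ⟨C, hC⟩ := hf.exists_bound (ε / 2) (half_pos hε) T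
  obtain ⟨D, hD⟩ := hg.exists_bound (ε / 2) (half_pos hε) T
  refine ⟨max |C| |D|, by positivity, fun x hx s hs => ?_⟩
  rw [norm_mul, mul_add]
  rcases le_total (ε / 2) s with hs_ge | hs_le
  · have norm_g_le : ‖g s‖ ≤ max |C| |D| :=
      (hD s ⟨hs_ge, hs.2.trans hx.2⟩).trans ((le_abs_self D).trans (le_max_right _ _))
    calc ‖f (x - s)‖ * ‖g s‖ ≤ max |C| |D| * ‖f (x - s)‖ := by rw [mul_comm]; gcongr
      _ ≤ _ := le_add_of_nonneg_right (by positivity)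
  · have norm_f_le : ‖f (x - s)‖ ≤ max |C| |D| :=
      (hC (x - s) ⟨by linarith [hx.1], by linarith [hx.2, hs.1]⟩).trans
        ((le_abs_self C).trans (le_max_left _ _))
    calc ‖f (x - s)‖ * ‖g s‖ ≤ max |C| |D| * ‖g s‖ := by gcongr
      _ ≤ _ := le_add_of_nonneg_left (by positivity)

lemma intervalIntegrable_sub_mul (hf : LaplaceConvolvable f) (hg : LaplaceConvolvable g)
    (hx : 0 < x) : IntervalIntegrable (fun s => f (x - s) * g s) volume 0 x := by
  obtain ⟨C, -, hC⟩ := hf.exists_bound_mul hg hx x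
  have hf' := hf.intervalIntegrable_comp_sub_left hx.le
  have hg' := hg.intervalIntegrable hx.le
  refine ((hf'.norm.add hg'.norm).const_mul C).mono_fun' ?_ ?_
  · exact hf'.def'.aestronglyMeasurable.mul hg'.def'.aestronglyMeasurable
  · refine ae_restrict_of_forall_mem measurableSet_uIoc fun s hs => ?_
    exact hC x ⟨le_rfl, le_rfl⟩ s (uIoc_of_le hx.le ▸ hs)

lemma convolutionExistsAt_indicator (hf : LaplaceConvolvable f) (hg : LaplaceConvolvable g)
    (x : ℝ) :
    ConvolutionExistsAt (indicator (Ioi 0) f) (indicator (Ioi 0) g) x (mul ℝ ℝ) := by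
  simp only [convolutionExistsAt_iff_integrable_swap, ContinuousLinearMap.mul_apply',
    indicator_Ioi_sub_mul_indicator_Ioi]
  rw [integrable_indicator_iff measurableSet_Ioo]
  rcases le_or_gt x 0 with hx | hx
  · simp only [Ioo_eq_empty hx.not_gt, integrableOn_empty]
  · exact (intervalIntegrable_iff_integrableOn_Ioo_of_le hx.le).1
      (hf.intervalIntegrable_sub_mul hg hx)

lemma integrableOn_lconv (hf : LaplaceConvolvable f) (hg : LaplaceConvolvable g) (T : ℝ) :
    IntegrableOn (lconv f g) (Ioc 0 T) := by
  have integrableOn_truncation {u : ℝ → ℝ} (hu : LaplaceConvolvable u) :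
      IntegrableOn (indicator (Ioc 0 T) u) (Ioi 0) :=
    ((integrable_indicator_iff measurableSet_Ioc).2 (hu.integrableOn T)).integrableOn
  have integrable_conv : Integrable (indicator (Ioi 0)
      (lconv (indicator (Ioc 0 T) f) (indicator (Ioc 0 T) g))) := by
    rw [indicator_lconv, ← posConvolution_eq_convolution_indicator _ _ (mul ℝ ℝ) volume]
    exact integrable_posConvolution (integrableOn_truncation hf) (integrableOn_truncation hg) _
  refine integrable_conv.integrableOn.congr_fun (fun x hx => ?_) measurableSet_Ioc
  have eqOn_truncation (u : ℝ → ℝ) : EqOn (indicator (Ioc 0 T) u) u (Ioo 0 x) := fun s hs =>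
    indicator_of_mem (mem_Ioc.2 ⟨hs.1, hs.2.le.trans hx.2⟩) u
  rw [indicator_of_mem (show x ∈ Ioi 0 from hx.1)]
  exact lconv_congr hx.1.le (eqOn_truncation f) (eqOn_truncation g)

lemma exists_bound_lconv (hf : LaplaceConvolvable f) (hg : LaplaceConvolvable g) {ε : ℝ}
    (hε : 0 < ε) (T : ℝ) : ∃ C, ∀ x ∈ Icc ε T, ‖lconv f g x‖ ≤ C := by
  obtain ⟨C, hC₀, hC⟩ := hf.exists_bound_mul hg hε T
  refine ⟨C * ((∫ s in (0 : ℝ)..T, ‖f s‖) + ∫ s in (0 : ℝ)..T, ‖g s‖), fun x hx => ?_⟩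
  have hx₀ : 0 ≤ x := hε.le.trans hx.1
  have hf' := (hf.intervalIntegrable_comp_sub_left hx₀).norm
  have hg' := (hg.intervalIntegrable hx₀).norm
  have integral_norm_le {u : ℝ → ℝ} (hu : LaplaceConvolvable u) :
      ∫ s in (0 : ℝ)..x, ‖u s‖ ≤ ∫ s in (0 : ℝ)..T, ‖u s‖ :=
    intervalIntegral.integral_mono_interval le_rfl hx₀ hx.2
      (Eventually.of_forall fun s => norm_nonneg (u s))
      (hu.intervalIntegrable (hx₀.trans hx.2)).norm
  calc ‖lconv f g x‖
      ≤ ∫ s in (0 : ℝ)..x, C * (‖f (x - s)‖ + ‖g s‖) :=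
        intervalIntegral.norm_integral_le_of_norm_le hx₀ (Eventually.of_forall (hC x hx))
          ((hf'.add hg').const_mul C)
    _ = C * ((∫ s in (0 : ℝ)..x, ‖f s‖) + ∫ s in (0 : ℝ)..x, ‖g s‖) := by
        rw [intervalIntegral.integral_const_mul, intervalIntegral.integral_add hf' hg',
          intervalIntegral.integral_comp_sub_left fun s => ‖f s‖, sub_self, sub_zero]
    _ ≤ C * ((∫ s in (0 : ℝ)..T, ‖f s‖) + ∫ s in (0 : ℝ)..T, ‖g s‖) := by
        gcongr
        exacts [integral_norm_le hf, integral_norm_le hg]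

lemma lconv (hf : LaplaceConvolvable f) (hg : LaplaceConvolvable g) :
    LaplaceConvolvable (lconv f g) where
  integrableOn := hf.integrableOn_lconv hg
  exists_bound _ hε T := hf.exists_bound_lconv hg hε T

lemma hasDerivAt_integral (hf : LaplaceConvolvable f) (ht : 0 < t) (hft : ContinuousAt f t) :
    HasDerivAt (fun x => ∫ τ in (0 : ℝ)..x, f τ) (f t) t :=
  intervalIntegral.integral_hasDerivAt_right (hf.intervalIntegrable ht.le)
    ⟨Ioc 0 (t + 1), Ioc_mem_nhds ht (lt_add_one t), (hf.integrableOn _).aestronglyMeasurable⟩ hft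

end LaplaceConvolvable

theorem lconv_assoc (hf : LaplaceConvolvable f) (hg : LaplaceConvolvable g)
    (hh : LaplaceConvolvable h) (ht : 0 < t) :
    lconv (lconv f g) h t = lconv f (lconv g h) t := by
  suffices indicator (Ioi 0) (lconv (lconv f g) h) t = indicator (Ioi 0) (lconv f (lconv g h)) t by
    simpa only [indicator_of_mem (mem_Ioi.2 ht)] using this
  simp only [indicator_lconv]
  refine convolution_assoc _ _ _ _ (fun a b c => mul_assoc a b c) hf.aestronglyMeasurable_indicator
    hg.aestronglyMeasurable_indicator hh.aestronglyMeasurable_indicator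
    (Eventually.of_forall (hf.convolutionExistsAt_indicator hg)) ?_ ?_
  · simp only [norm_indicator_eq_indicator_norm]
    exact Eventually.of_forall (hg.norm.convolutionExistsAt_indicator hh.norm)
  · simp only [norm_indicator_eq_indicator_norm, ← indicator_lconv]
    exact hf.norm.convolutionExistsAt_indicator (hg.norm.lconv hh.norm) t

namespace Cm1

lemma continuousOn (hf : Cm1 f) : ContinuousOn f (Ioi 0) := by
  obtain ⟨p, -, f₁, hf₁, hf_eq⟩ := hf
  have continuousOn_rpow : ContinuousOn (fun t : ℝ => t ^ p) (Ioi 0) :=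
    continuousOn_id.rpow_const fun t ht => Or.inl (ne_of_gt ht)
  exact (continuousOn_rpow.mul (hf₁.mono Ioi_subset_Ici_self)).congr hf_eq

lemma integrableOn (hf : Cm1 f) (T : ℝ) : IntegrableOn f (Ioc 0 T) := by
  obtain ⟨p, hp, f₁, hf₁, hf_eq⟩ := hf
  rcases le_or_gt T 0 with hT | hT
  · simp only [Ioc_eq_empty hT.not_gt, integrableOn_empty]
  have integrable_rpow_mul : IntervalIntegrable (fun t => t ^ p * f₁ t) volume 0 T :=
    (intervalIntegral.intervalIntegrable_rpow' hp).mul_continuousOn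
      (hf₁.mono (uIcc_of_le hT.le ▸ Icc_subset_Ici_self))
  exact ((intervalIntegrable_iff_integrableOn_Ioc_of_le hT.le).1 integrable_rpow_mul).congr_fun
    (fun t ht => (hf_eq t ht.1).symm) measurableSet_Ioc

lemma laplaceConvolvable (hf : Cm1 f) : LaplaceConvolvable f where
  integrableOn := hf.integrableOn
  exists_bound _ hε _ := isCompact_Icc.exists_bound_of_continuousOn
    (hf.continuousOn.mono fun _ hx => hε.trans_le hx.1)

end Cm1

lemma Cm10.cm1 (hf : Cm10 f) : Cm1 f := by
  obtain ⟨p, hp, -, hf₁⟩ := hf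
  exact ⟨p, hp, hf₁⟩

theorem lconv_lconv_eq_integral {κ k : ℝ → ℝ} (hκ : LaplaceConvolvable κ)
    (hk : LaplaceConvolvable k) (hSonine : ∀ t : ℝ, 0 < t → lconv κ k t = 1)
    (hf : LaplaceConvolvable f) (ht : 0 < t) :
    lconv k (lconv κ f) t = ∫ τ in (0 : ℝ)..t, f τ :=
  calc lconv k (lconv κ f) t = lconv (lconv κ k) f t := by
        rw [← lconv_assoc hk hκ hf ht, lconv_comm k κ]
    _ = lconv (fun _ => 1) f t := lconv_congr ht.le (fun s hs => hSonine s hs.1) fun _ _ => rfl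
    _ = ∫ τ in (0 : ℝ)..t, f τ := lconv_one_left f t

theorem statement4_general {κ k : ℝ → ℝ} (hκ : LaplaceConvolvable κ) (hk : LaplaceConvolvable k)
    (hSonine : ∀ t : ℝ, 0 < t → lconv κ k t = 1) (hf : LaplaceConvolvable f) (ht : 0 < t)
    (hft : ContinuousAt f t) : HasDerivAt (lconv k (lconv κ f)) (f t) t :=
  (hf.hasDerivAt_integral ht hft).congr_of_eventuallyEq <| by
    filter_upwards [Ioi_mem_nhds ht] with x hx
    exact lconv_lconv_eq_integral hκ hk hSonine hf hx

end

/-- First Fundamental Theorem for the GFD, Riemann-Liouville case: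
for a Sonine pair `(κ, k)` from `S_{-1}` and `f ∈ C_{-1}(0,∞)`,
`(D_{(k)} I_{(κ)} f)(t) = f(t)` for all `t > 0`. -/
theorem statement4 (κ k : ℝ → ℝ) (hκ : Cm10 κ) (hk : Cm10 k)
    (hSonine : ∀ t : ℝ, 0 < t → lconv κ k t = 1)
    (f : ℝ → ℝ) (hf : Cm1 f) :
    ∀ t : ℝ, 0 < t → HasDerivAt (lconv k (lconv κ f)) (f t) t :=
  fun _ ht => statement4_general hκ.cm1.laplaceConvolvable hk.cm1.laplaceConvolvable hSonine
    hf.laplaceConvolvable ht (hf.continuousOn.continuousAt (Ioi_mem_nhds ht))
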